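/- Let α ∈ ℂ with α ≠ 0 and set β = 1/α. Let d ≥ 1 and let P ∈ ℂ[λ,x₁,x₂,…] be a polynomial homogeneous of degree d with respect to the grading deg λ = 1, deg x_k = k, satisfying (1/k!)·∂^kP/∂λ^k = α·∂P/∂x_k for every k ≥ 1. Then there exists γ ∈ ℂ such that P(λ;x₁,x₂,x₃,…) = γ·S_d(λ + β·x₁/1!, β·x₂/2!, β·x₃/3!, …), i.e. P is obtained from the elementary Schur polynomial S_d(y₁,…,y_d) by substituting y₁ ↦ λ + β·x₁/1! and y_k ↦ β·x_k/k! for 2 ≤ k ≤ d. -/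

import Mathlib

open MvPolynomial

/-- The elementary Schur polynomial `S_n(y₁,y₂,…) = ∑_{i₁+2i₂+⋯=n} ∏_k y_k^{i_k}/i_k!`,
in the polynomial ring `ℚ[y₁,y₂,…] ⊆ MvPolynomial ℕ ℚ` with `y_k = X k` for `k ≥ 1`.
(In any solution of `∑_{k=1}^n k·i_k = n` each `i_k` is at most `n`, so it suffices to sum
over exponent tuples `i : Fin n → Fin (n+1)`.) -/
noncomputable def schur (n : ℕ) : MvPolynomial ℕ ℚ :=
  ∑ i : Fin n → Fin (n + 1),
    if (∑ k : Fin n, (k.1 + 1) * (i k).1) = n then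
      ∏ k : Fin n, C (((i k).1.factorial : ℚ)⁻¹) * X (k.1 + 1) ^ ((i k).1)
    else 0

/- We work in `ℂ[λ,x₁,x₂,…] = MvPolynomial ℕ ℂ`, where `X 0 = λ` and `X k = x_k` for `k ≥ 1`. -/

/-!
A solution of the system is determined by its restriction `P(λ; 0, 0, …)`: read on coefficients,
the `k`-th equation trades one factor `x_k` of a monomial for `λ ^ k`. On the other hand
`∂S_n/∂y_k = S_{n-k}`, so by the chain rule `Q = S_d(λ + β x₁/1!, β x₂/2!, …)` satisfies
`∂ᵏQ/∂λᵏ = S_{d-k}(…)` and `∂Q/∂x_k = (β/k!) S_{d-k}(…)`; it is therefore a solution, with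
`Q(λ; 0, 0, …) = λ ^ d / d!`.
-/

open scoped Nat

section General

variable {σ R A : Type*} [CommSemiring R] [CommSemiring A] [Algebra R A]

lemma coeff_iterate_pderiv (i : σ) (k : ℕ) (p : MvPolynomial σ R) (m : σ →₀ ℕ) :
    coeff m ((pderiv i)^[k] p) =
      (m i + 1).ascFactorial k * coeff (m + Finsupp.single i k) p := by
  induction k generalizing p with
  | zero => simp
  | succ k ih =>
    rw [Function.iterate_succ_apply, ih, coeff_pderiv, add_assoc, ← Finsupp.single_add,
      Nat.ascFactorial_succ]
    simp only [Finsupp.add_apply, Finsupp.single_eq_same]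
    push_cast
    ring

lemma derivation_aeval_eq_sum (D : Derivation R A A) (g : σ → A) {s : Finset σ}
    (hs : ∀ i ∉ s, D (g i) = 0) (p : MvPolynomial σ R) :
    D (aeval g p) = ∑ i ∈ s, aeval g (pderiv i p) * D (g i) := by
  classical
  induction p using MvPolynomial.induction_on with
  | C a => simp
  | add p q hp hq => simp only [map_add, hp, hq, add_mul, Finset.sum_add_distrib]
  | mul_X p j hp =>
    have hj : ∑ i ∈ s, aeval g (p * pderiv i (X j)) * D (g i) = aeval g p * D (g j) := by
      rw [Finset.sum_eq_single j]
      · simp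
      · intro i _ hij
        simp [pderiv_X_of_ne hij.symm]
      · intro hjs
        simp [hs j hjs]
    calc D (aeval g (p * X j))
        = aeval g p * D (g j) + g j * ∑ i ∈ s, aeval g (pderiv i p) * D (g i) := by
          rw [map_mul, aeval_X, Derivation.leibniz, hp, smul_eq_mul, smul_eq_mul]
      _ = ∑ i ∈ s, aeval g (pderiv i (p * X j)) * D (g i) := by
          rw [← hj, Finset.mul_sum, ← Finset.sum_add_distrib]
          refine Finset.sum_congr rfl fun i _ => ?_
          simp only [pderiv_mul, map_add, map_mul, aeval_X]
          ring

/-- The coefficient `1 / ∏ k, (m k)!` of the monomial `y ^ m` in an elementary Schur polynomial. -/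
noncomputable def invFactorial (m : σ →₀ ℕ) : ℚ :=
  m.prod fun _ e => (e ! : ℚ)⁻¹

lemma invFactorial_add_single (m : σ →₀ ℕ) (k : σ) :
    invFactorial (m + Finsupp.single k 1) * (m k + 1) = invFactorial m := by
  have hsplit (m : σ →₀ ℕ) : invFactorial m = ((m k)! : ℚ)⁻¹ * invFactorial (m.erase k) :=
    (m.mul_prod_erase' k _ (by simp)).symm
  rw [hsplit m, hsplit (m + _), Finsupp.erase_add, Finsupp.erase_single, add_zero,
    Finsupp.add_apply, Finsupp.single_eq_same, Nat.factorial_succ]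
  push_cast
  field_simp

end General

section Schur

/-- The exponent of the monomial `∏ k, y_k ^ i_k`, where `i_k` is stored at index `k - 1` of the
tuple, as in `schur`. -/
noncomputable def tupleExponent {n : ℕ} (i : Fin n → ℕ) : ℕ →₀ ℕ :=
  (Finsupp.equivFunOnFinite.symm i).embDomain (Fin.valEmbedding.trans (addRightEmbedding 1))

lemma tupleExponent_zero {n : ℕ} (i : Fin n → ℕ) : tupleExponent i 0 = 0 :=
  Finsupp.embDomain_of_notMem_range _ _ _ (by simp)

lemma tupleExponent_add_one {n : ℕ} (i : Fin n → ℕ) (k : Fin n) :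
    tupleExponent i (k + 1) = i k :=
  Finsupp.embDomain_apply_self (Fin.valEmbedding.trans (addRightEmbedding 1)) _ k

lemma tupleExponent_injective {n : ℕ} :
    Function.Injective (tupleExponent : (Fin n → ℕ) → ℕ →₀ ℕ) :=
  (Finsupp.embDomain_injective _).comp Finsupp.equivFunOnFinite.symm.injective

lemma weight_tupleExponent {n : ℕ} (i : Fin n → ℕ) :
    Finsupp.weight id (tupleExponent i) = ∑ k : Fin n, (k.1 + 1) * i k := by
  simp [Finsupp.weight_apply, tupleExponent, Finsupp.sum_embDomain, Finsupp.sum_fintype, mul_comm]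

lemma prod_C_mul_X_pow_eq_monomial {n : ℕ} (i : Fin n → ℕ) :
    ∏ k : Fin n, C (((i k)! : ℚ)⁻¹) * X (k.1 + 1) ^ i k =
      monomial (tupleExponent i) (invFactorial (tupleExponent i)) := by
  simp [monomial_eq, invFactorial, tupleExponent, Finsupp.prod_embDomain, Finsupp.prod_fintype,
    Finset.prod_mul_distrib, ← map_prod]

lemma exists_tupleExponent_eq {n : ℕ} {m : ℕ →₀ ℕ} (h0 : m 0 = 0)
    (hm : Finsupp.weight id m = n) :
    ∃ i : Fin n → Fin (n + 1), tupleExponent (fun k => (i k : ℕ)) = m := by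
  have hle (k : ℕ) : m (k + 1) ≤ n := hm ▸ Finsupp.le_weight id k.succ_ne_zero m
  refine ⟨fun k => ⟨m (k + 1), Nat.lt_succ_of_le (hle k)⟩, ?_⟩
  ext x
  rcases x with _ | x
  · rw [tupleExponent_zero, h0]
  by_cases hx : x < n
  · exact tupleExponent_add_one _ ⟨x, hx⟩
  · have hmx : m (x + 1) = 0 := by
      by_contra hne
      have : x + 1 ≤ n := hm ▸ Finsupp.le_weight_of_ne_zero' (w := id) hne
      omega
    rw [hmx]
    refine Finsupp.embDomain_of_notMem_range _ _ _ ?_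
    rintro ⟨k, hk⟩
    have : k.1 + 1 = x + 1 := hk
    omega

lemma coeff_schur (n : ℕ) (m : ℕ →₀ ℕ) :
    coeff m (schur n) = if m 0 = 0 ∧ Finsupp.weight id m = n then invFactorial m else 0 := by
  classical
  simp only [schur, coeff_sum, ← weight_tupleExponent (fun k => ((_ : Fin n → Fin (n + 1)) k : ℕ)),
    prod_C_mul_X_pow_eq_monomial (fun k => ((_ : Fin n → Fin (n + 1)) k : ℕ))]
  split_ifs with h
  · obtain ⟨i, rfl⟩ := exists_tupleExponent_eq h.1 h.2
    rw [Finset.sum_eq_single i, if_pos h.2, coeff_monomial, if_pos rfl]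
    · intro j _ hji
      have hne : tupleExponent (fun k => (j k : ℕ)) ≠ tupleExponent (fun k => (i k : ℕ)) :=
        fun h => hji (funext fun k => Fin.ext (congrFun (tupleExponent_injective h) k))
      split_ifs <;> simp [coeff_monomial, hne]
    · simp
  · refine Finset.sum_eq_zero fun i _ => ?_
    split_ifs with hi
    · rw [coeff_monomial, if_neg]
      rintro rfl
      exact h ⟨tupleExponent_zero _, hi⟩
    · exact coeff_zero m

lemma pderiv_zero_schur (n : ℕ) : pderiv 0 (schur n) = 0 := by
  ext m
  simp [coeff_pderiv, coeff_schur]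

lemma pderiv_schur {k : ℕ} (hk : k ≠ 0) (n : ℕ) :
    pderiv k (schur n) = if k ≤ n then schur (n - k) else 0 := by
  ext m
  have hweight : Finsupp.weight id (m + Finsupp.single k 1) = Finsupp.weight id m + k := by
    simp [Finsupp.weight_single]
  have hzero : (m + Finsupp.single k 1 : ℕ →₀ ℕ) 0 = m 0 := by simp [hk]
  rw [coeff_pderiv, coeff_schur, hweight, hzero, ite_mul, zero_mul, invFactorial_add_single]
  by_cases hkn : k ≤ n
  · simp only [if_pos hkn, coeff_schur, eq_tsub_iff_add_eq_of_le hkn]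
  · rw [if_neg hkn, if_neg (by omega), coeff_zero]

lemma constantCoeff_schur (n : ℕ) : constantCoeff (schur n) = if n = 0 then 1 else 0 := by
  simp [constantCoeff_eq, coeff_schur, invFactorial, eq_comm]

lemma derivation_aeval_schur {A : Type*} [CommSemiring A] [Algebra ℚ A] (D : Derivation ℚ A A)
    (g : ℕ → A) {k : ℕ} (hk : k ≠ 0) (hD : ∀ i, i ≠ 0 → i ≠ k → D (g i) = 0) (n : ℕ) :
    D (aeval g (schur n)) = if k ≤ n then aeval g (schur (n - k)) * D (g k) else 0 := by
  have hs : ∀ i ∉ ({0, k} : Finset ℕ), D (g i) = 0 := by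
    intro i hi
    simp only [Finset.mem_insert, Finset.mem_singleton, not_or] at hi
    exact hD i hi.1 hi.2
  rw [derivation_aeval_eq_sum D g hs, Finset.sum_pair hk.symm, pderiv_zero_schur, pderiv_schur hk]
  split_ifs <;> simp

end Schur

section System

variable {R : Type*} [CommRing R] [Algebra ℚ R]

lemma algebraMap_inv_natCast_mul_self {n : ℕ} (hn : n ≠ 0) :
    algebraMap ℚ R (n : ℚ)⁻¹ * n = 1 := by
  rw [← map_natCast (algebraMap ℚ R), ← map_mul, inv_mul_cancel₀ (Nat.cast_ne_zero.mpr hn),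
    map_one]

/-- The system `(1/k!) ∂ᵏP/∂λᵏ = α ∂P/∂x_k`, `k ≥ 1`, over a commutative `ℚ`-algebra, with
`X 0 = λ` and `X k = x_k`. -/
def SchurSystem (α : R) (P : MvPolynomial ℕ R) : Prop :=
  ∀ k : ℕ, 1 ≤ k → (k ! : ℚ)⁻¹ • (pderiv 0)^[k] P = C α * pderiv k P

namespace SchurSystem

variable {α β γ : R} {P Q : MvPolynomial ℕ R}

lemma coeff_add_single (hP : SchurSystem α P) (hαβ : α * β = 1) {k : ℕ} (hk : 1 ≤ k)
    (m : ℕ →₀ ℕ) :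
    coeff (m + Finsupp.single k 1) P =
      algebraMap ℚ R (m k + 1 : ℚ)⁻¹ * (m 0 + k).choose k * β *
        coeff (m + Finsupp.single 0 k) P := by
  have h := congrArg (coeff m) (hP k hk)
  rw [coeff_smul, Algebra.smul_def, coeff_C_mul, coeff_iterate_pderiv, coeff_pderiv,
    Nat.ascFactorial_eq_factorial_mul_choose, Nat.cast_mul] at h
  have hfact := algebraMap_inv_natCast_mul_self (R := R) k.factorial_ne_zero
  have hsucc := algebraMap_inv_natCast_mul_self (R := R) (m k).succ_ne_zero
  push_cast at hsucc
  set c := coeff (m + Finsupp.single k 1) P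
  linear_combination (-c * α * β) * hsucc - c * hαβ
    - (algebraMap ℚ R (m k + 1 : ℚ)⁻¹ * β) * h
    + (algebraMap ℚ R (m k + 1 : ℚ)⁻¹ * β * (m 0 + k).choose k *
      coeff (m + Finsupp.single 0 k) P) * hfact

theorem eq_C_mul (hP : SchurSystem α P) (hQ : SchurSystem α Q) (hαβ : α * β = 1)
    (hPQ : ∀ n, coeff (Finsupp.single 0 n) P = γ * coeff (Finsupp.single 0 n) Q) :
    P = C γ * Q := by
  suffices h : ∀ (s : Multiset ℕ) (a : ℕ),
      coeff (s.toFinsupp + Finsupp.single 0 a) P =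
        γ * coeff (s.toFinsupp + Finsupp.single 0 a) Q by
    ext m
    simpa using h (Finsupp.toMultiset m) 0
  intro s
  induction s using Multiset.induction with
  | empty => simpa using hPQ
  | cons k s ih =>
    intro a
    rw [← Multiset.singleton_add, map_add, Multiset.toFinsupp_singleton]
    obtain rfl | hk := k.eq_zero_or_pos
    · rw [add_comm (Finsupp.single 0 1), add_assoc, ← Finsupp.single_add, ih]
    · rw [add_assoc, add_comm (Finsupp.single k 1), hP.coeff_add_single hαβ hk,
        hQ.coeff_add_single hαβ hk, add_assoc, ← Finsupp.single_add, ih]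
      ring

end SchurSystem

/-- The substitution `y₁ ↦ λ + β x₁`, `y_k ↦ β x_k / k!` for `k ≥ 2`. The value at `k = 0` is
irrelevant, as no `y₀` occurs in `schur`. -/
noncomputable def schurSubst (β : R) (k : ℕ) : MvPolynomial ℕ R :=
  if k = 1 then X 0 + C β * X 1 else C ((k ! : ℚ)⁻¹ • β) * X k

lemma pderiv_zero_schurSubst (β : R) {i : ℕ} (hi : i ≠ 0) :
    pderiv 0 (schurSubst β i) = if i = 1 then 1 else 0 := by
  unfold schurSubst
  split_ifs <;> simp [hi]

lemma pderiv_schurSubst (β : R) {k : ℕ} (hk : k ≠ 0) (i : ℕ) :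
    pderiv k (schurSubst β i) = if i = k then C ((k ! : ℚ)⁻¹ • β) else 0 := by
  unfold schurSubst
  split_ifs with h1 hik hik
  · subst hik h1
    simp
  · subst h1
    simp [pderiv_X_of_ne hik, pderiv_X_of_ne hk.symm]
  · subst hik
    simp
  · simp [pderiv_X_of_ne hik]

lemma pderiv_zero_aeval_schur (β : R) (n : ℕ) :
    pderiv 0 (aeval (schurSubst β) (schur n)) =
      if 1 ≤ n then aeval (schurSubst β) (schur (n - 1)) else 0 := by
  have hD (i : ℕ) (hi : i ≠ 0) (hi1 : i ≠ 1) : pderiv 0 (schurSubst β i) = 0 := by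
    rw [pderiv_zero_schurSubst β hi, if_neg hi1]
  have h := derivation_aeval_schur ((pderiv 0).restrictScalars ℚ) _ one_ne_zero hD n
  simpa [pderiv_zero_schurSubst] using h

lemma pderiv_aeval_schur (β : R) {k : ℕ} (hk : k ≠ 0) (n : ℕ) :
    pderiv k (aeval (schurSubst β) (schur n)) =
      if k ≤ n then aeval (schurSubst β) (schur (n - k)) * C ((k ! : ℚ)⁻¹ • β)
      else 0 := by
  have hD (i : ℕ) (_ : i ≠ 0) (hik : i ≠ k) : pderiv k (schurSubst β i) = 0 := by
    rw [pderiv_schurSubst β hk, if_neg hik]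
  have h := derivation_aeval_schur ((pderiv k).restrictScalars ℚ) _ hk hD n
  simpa [pderiv_schurSubst β hk] using h

lemma iterate_pderiv_zero_aeval_schur (β : R) (k n : ℕ) :
    (pderiv 0)^[k] (aeval (schurSubst β) (schur n)) =
      if k ≤ n then aeval (schurSubst β) (schur (n - k)) else 0 := by
  induction k generalizing n with
  | zero => simp
  | succ k ih =>
    rw [Function.iterate_succ_apply, pderiv_zero_aeval_schur]
    split_ifs with hn hkn hkn
    · rw [ih, if_pos (by omega), Nat.sub_sub, add_comm]
    · rw [ih, if_neg (by omega)]
    · omega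
    · exact iterate_map_zero _ k

lemma schurSystem_aeval_schur {α β : R} (hαβ : α * β = 1) (d : ℕ) :
    SchurSystem α (aeval (schurSubst β) (schur d)) := by
  intro k hk
  rw [iterate_pderiv_zero_aeval_schur, pderiv_aeval_schur β (by omega)]
  split_ifs
  · have hC : C (σ := ℕ) α * C β = 1 := by rw [← C_mul, hαβ, C_1]
    rw [Algebra.smul_def, Algebra.smul_def, MvPolynomial.algebraMap_apply, C_mul]
    linear_combination -(C (algebraMap ℚ R (k ! : ℚ)⁻¹) * aeval (schurSubst β) (schur (d - k))) * hC
  · simp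

lemma constantCoeff_aeval_schurSubst (β : R) (p : MvPolynomial ℕ ℚ) :
    constantCoeff (aeval (schurSubst β) p) = algebraMap ℚ R (constantCoeff p) := by
  have hsubst (k : ℕ) : constantCoeff (schurSubst β k) = 0 := by
    unfold schurSubst
    split_ifs <;> simp
  rw [map_aeval, funext hsubst, eval₂Hom_zero'_apply, RingHom.comp_apply,
    MvPolynomial.algebraMap_apply, constantCoeff_C]

lemma coeff_single_zero_aeval_schur (β : R) (n d : ℕ) :
    coeff (Finsupp.single 0 n) (aeval (schurSubst β) (schur d)) =
      if n = d then algebraMap ℚ R (n ! : ℚ)⁻¹ else 0 := by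
  have h := coeff_iterate_pderiv 0 n (aeval (schurSubst β) (schur d)) 0
  rw [Finsupp.coe_zero, Pi.zero_apply, zero_add, zero_add, Nat.one_ascFactorial] at h
  rw [← one_mul (coeff _ _), ← algebraMap_inv_natCast_mul_self n.factorial_ne_zero, mul_assoc, ← h,
    iterate_pderiv_zero_aeval_schur, ← constantCoeff_eq]
  split_ifs with hnd heq heq
  · rw [constantCoeff_aeval_schurSubst, constantCoeff_schur, if_pos (by omega), map_one,
      mul_one]
  · rw [constantCoeff_aeval_schurSubst, constantCoeff_schur, if_neg (by omega), map_zero,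
      mul_zero]
  · omega
  · rw [map_zero, mul_zero]

theorem stmt4_general {α β : R} (hαβ : α * β = 1) (d : ℕ) (P : MvPolynomial ℕ R)
    (hP : SchurSystem α P) (hcoeff : ∀ n ≠ d, coeff (Finsupp.single 0 n) P = 0) :
    ∃ γ : R, P = C γ * aeval (schurSubst β) (schur d) := by
  refine ⟨d ! * coeff (Finsupp.single 0 d) P,
    hP.eq_C_mul (schurSystem_aeval_schur hαβ d) hαβ fun n => ?_⟩
  rw [coeff_single_zero_aeval_schur]
  split_ifs with hn
  · subst hn
    rw [mul_right_comm, mul_comm (n ! : R), algebraMap_inv_natCast_mul_self n.factorial_ne_zero,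
      one_mul]
  · rw [hcoeff n hn, mul_zero]

end System

section Field

variable {K : Type*} [Field K] [Algebra ℚ K]

lemma schurSystem_iff_of_field {α : K} {P : MvPolynomial ℕ K} :
    SchurSystem α P ↔
      ∀ k : ℕ, 1 ≤ k → C ((k ! : K)⁻¹) * (pderiv 0)^[k] P = C α * pderiv k P := by
  simp only [SchurSystem, inv_natCast_smul_eq ℚ K, C_mul']

lemma schurSubst_eq_of_field (β : K) :
    schurSubst β =
      fun k => if k = 1 then X 0 + C β * X 1 else C (β * (k ! : K)⁻¹) * X k := by
  funext k
  rw [schurSubst, inv_natCast_smul_eq ℚ K, smul_eq_mul, mul_comm _ β]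

end Field

/-- If `α ≠ 0`, `β = 1/α`, and `P` is homogeneous of degree `d ≥ 1` (for `deg λ = 1`,
`deg x_k = k`) and satisfies `(1/k!) ∂ᵏP/∂λᵏ = α ∂P/∂x_k` for all `k ≥ 1`, then
`P = γ · S_d(λ + β x₁/1!, β x₂/2!, β x₃/3!, …)` for some `γ ∈ ℂ`. -/
theorem stmt4 (α β : ℂ) (hα : α ≠ 0) (hβ : β = 1 / α) (d : ℕ) (hd : 1 ≤ d)
    (P : MvPolynomial ℕ ℂ)
    (hhom : P.IsWeightedHomogeneous (fun k => if k = 0 then 1 else k) d)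
    (hsys : ∀ k : ℕ, 1 ≤ k →
      C ((k.factorial : ℂ)⁻¹) * (fun q => pderiv 0 q)^[k] P = C α * pderiv k P) :
    ∃ γ : ℂ, P = C γ *
      aeval (fun k => if k = 1 then X 0 + C β * X 1
        else C (β * ((k.factorial : ℂ))⁻¹) * X k) (schur d) := by
  rw [← schurSubst_eq_of_field]
  exact stmt4_general (by rw [hβ, mul_one_div_cancel hα]) d P (schurSystem_iff_of_field.mpr hsys)
    fun n hn => hhom.coeff_eq_zero _ (by simpa [Finsupp.weight_single] using hn)
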